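/- Write ∏_{i=0}^{k} e(t^i z) = Σ_{m≥0} c_m z^m with c_m ∈ E. Then c_m = 0 unless (k+1) divides m, and writing ε_i = c_{i(k+1)}, each ε_i lies in E_{k+1} and has the expansion ε_i = (−1)^{ik} e_i^{k+1} + Σ_{λ ≻ (i^{k+1})} c_{λ,i} e_λ, where the sum is over partitions λ ∈ π_{k+1} that are strictly greater than (i, i, …, i) (k+1 copies) in the lexicographic order and c_{λ,i} ∈ ℂ. -/

import Mathlib

open MvPolynomial

/-- In `E = ℂ[e_0, e_1, e_2, …]` (realized as `MvPolynomial ℕ ℂ`, variable `X i = e_i`),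
the monomial `e_λ = e_{λ_1}⋯e_{λ_m}` attached to `λ : Fin m → ℕ`. -/
noncomputable def eMon (m : ℕ) (l : Fin m → ℕ) : MvPolynomial ℕ ℂ :=
  ∏ i, MvPolynomial.X (l i)

/-- `E_m ⊂ E`: the linear span of the monomials `e_λ`, `λ ∈ π_m`. -/
noncomputable def Esub (m : ℕ) : Submodule ℂ (MvPolynomial ℕ ℂ) :=
  Submodule.span ℂ {p | ∃ l : Fin m → ℕ, Antitone l ∧ p = eMon m l}

/-- The coefficient `c_m` of `z^m` in `∏_{i=0}^{k} e(t^i z)` where `e(z) = Σ_{i≥0} e_i z^i`: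
`c_m = Σ_{a_0+⋯+a_k=m} (∏_i t^{i·a_i}) e_{a_0}⋯e_{a_k}`. -/
noncomputable def wheelCoeff (k : ℕ) (t : ℂ) (m : ℕ) : MvPolynomial ℕ ℂ :=
  ∑ a ∈ Finset.Nat.antidiagonalTuple (k + 1) m,
    (∏ i : Fin (k + 1), t ^ ((i : ℕ) * a i)) • ∏ i, MvPolynomial.X (a i)

/-- `λ ≻ μ` in the lexicographic order (for partitions of the same weight):
`λ_j > μ_j` at the first index where they differ. -/
def LexGT {m : ℕ} (l l' : Fin m → ℕ) : Prop :=
  ∃ j : Fin m, l' j < l j ∧ ∀ a : Fin m, a < j → l a = l' a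

/-!
Multiplying `z` by `t` permutes the factors of `∏ e(tʲz)` cyclically, so the product is invariant
under `z ↦ tz` and its `m`-th coefficient satisfies `c_m = t^m c_m`; hence `c_m = 0` unless
`t^m = 1`, that is, unless `(k+1) ∣ m`.

Among the tuples `(a_0, …, a_k)` of sum `i(k+1)`, the constant one contributes `e_i^{k+1}` with
coefficient `(∏ tʲ)^i = (-1)^{ik}`. Any other tuple, once sorted, is a partition with the same mean
`i`; where it first differs from `i` it must exceed `i`, since otherwise all of its remaining parts
would be smaller than `i` and its mean would be too small.
-/

section RootsOfUnity

variable {R : Type*}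

lemma prod_range_pow_eq_neg_one_pow [CommRing R] [IsDomain R] {n : ℕ} {s : R}
    (hs : IsPrimitiveRoot s (n + 1)) :
    ∏ j ∈ Finset.range (n + 1), s ^ j = (-1) ^ n := by
  -- Compare the constant terms of `X ^ (n + 1) - 1 = ∏ (X - s ^ j)`.
  have hroots : (-1 : R) = (-1) ^ (n + 1) * ∏ j ∈ Finset.range (n + 1), s ^ j := by
    simpa [Polynomial.eval_prod, Finset.prod_neg] using congrArg (Polynomial.eval 0)
      (X_pow_sub_C_eq_prod hs n.succ_pos (one_pow (n + 1)))
  calc ∏ j ∈ Finset.range (n + 1), s ^ j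
      = (-1) ^ (n + 1) * ((-1) ^ (n + 1) * ∏ j ∈ Finset.range (n + 1), s ^ j) := by
        rw [← mul_assoc, ← mul_pow, neg_one_mul, neg_neg, one_pow, one_mul]
    _ = (-1) ^ n := by rw [← hroots, pow_succ, mul_assoc, neg_one_mul, neg_neg, mul_one]

lemma prod_pow_mul_eq_neg_one_pow [CommRing R] [IsDomain R] {n : ℕ} {s : R}
    (hs : IsPrimitiveRoot s (n + 1)) (i : ℕ) :
    ∏ j : Fin (n + 1), s ^ ((j : ℕ) * i) = (-1) ^ (i * n) := by
  simp only [pow_mul, Finset.prod_pow]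
  rw [Fin.prod_univ_eq_prod_range (s ^ ·), prod_range_pow_eq_neg_one_pow hs, pow_right_comm]

lemma rescale_prod_rescale_pow [CommSemiring R] {n : ℕ} {s : R} (hs : s ^ n = 1)
    (f : PowerSeries R) :
    PowerSeries.rescale s (∏ j ∈ Finset.range n, PowerSeries.rescale (s ^ j) f) =
      ∏ j ∈ Finset.range n, PowerSeries.rescale (s ^ j) f := by
  simp only [map_prod, PowerSeries.rescale_rescale, ← pow_succ]
  cases n with
  | zero => rfl
  | succ n => rw [Finset.prod_range_succ, Finset.prod_range_succ' _ n, hs, pow_zero]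

lemma coeff_prod_rescale_pow_eq_zero [CommSemiring R] [IsCancelMulZero R] {n m : ℕ} {s : R}
    (hs : IsPrimitiveRoot s n) (hm : ¬ n ∣ m) (f : PowerSeries R) :
    PowerSeries.coeff m (∏ j ∈ Finset.range n, PowerSeries.rescale (s ^ j) f) = 0 := by
  have hinvariant :=
    congrArg (PowerSeries.coeff m) (rescale_prod_rescale_pow hs.pow_eq_one f)
  rw [PowerSeries.coeff_rescale] at hinvariant
  exact (mul_left_eq_self₀.mp hinvariant).resolve_left (mt (hs.dvd_of_pow_eq_one m) hm)

end RootsOfUnity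

lemma coeff_prod_univ_fin {R : Type*} [CommSemiring R] {n : ℕ} (f : Fin n → PowerSeries R)
    (m : ℕ) :
    PowerSeries.coeff m (∏ j, f j) =
      ∑ a ∈ Finset.Nat.antidiagonalTuple n m, ∏ j, PowerSeries.coeff (a j) (f j) := by
  rw [PowerSeries.coeff_prod]
  exact Finset.sum_equiv Finsupp.equivFunOnFinite
    (by simp [Finset.Nat.mem_antidiagonalTuple]) (by simp)

section Sorting

variable {α : Type*} [LinearOrder α] {n : ℕ}

/-- The weakly decreasing rearrangement of a tuple. For tuples of natural numbers it is the
partition whose parts are the entries of the tuple. -/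
def sortDesc (a : Fin n → α) : Fin n → α :=
  a ∘ Tuple.sort (OrderDual.toDual ∘ a)

lemma antitone_sortDesc (a : Fin n → α) : Antitone (sortDesc a) :=
  Tuple.monotone_sort (OrderDual.toDual ∘ a)

@[to_additive]
lemma prod_sortDesc {M : Type*} [CommMonoid M] (a : Fin n → α) (f : α → M) :
    ∏ j, f (sortDesc a j) = ∏ j, f (a j) :=
  Equiv.prod_comp (Tuple.sort (OrderDual.toDual ∘ a)) (fun j => f (a j))

lemma sortDesc_eq_const_iff {a : Fin n → α} {c : α} :
    sortDesc a = (fun _ => c) ↔ a = fun _ => c := by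
  simp only [funext_iff]
  exact (Tuple.sort (OrderDual.toDual ∘ a)).forall_congr_right (q := fun j => a j = c)

end Sorting

section LexGT

variable {n i : ℕ} {l : Fin n → ℕ}

lemma lexGT_iff_toLex_lt {l' : Fin n → ℕ} : LexGT l l' ↔ toLex l' < toLex l :=
  exists_congr fun _ => and_comm.trans (and_congr_left' (forall₂_congr fun _ _ => eq_comm))

lemma sum_lt_of_const_lexGT (hl : Antitone l) (hlex : LexGT (fun _ => i) l) :
    ∑ j, l j < i * n := by
  obtain ⟨j, hj, hbefore⟩ := hlex
  have hle : ∀ a, l a ≤ i := fun a =>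
    (lt_or_ge a j).elim (fun ha => (hbefore a ha).ge) fun ha => (hl ha).trans hj.le
  calc ∑ a, l a < ∑ _a : Fin n, i :=
        Finset.sum_lt_sum (fun a _ => hle a) ⟨j, Finset.mem_univ j, hj⟩
    _ = i * n := by simp [mul_comm]

lemma lexGT_const_of_le_sum (hl : Antitone l) (hsum : i * n ≤ ∑ j, l j)
    (hne : l ≠ fun _ => i) : LexGT l (fun _ => i) := by
  rcases lt_or_gt_of_ne (toLex_inj.not.mpr hne) with hlt | hgt
  · exact absurd (sum_lt_of_const_lexGT hl (lexGT_iff_toLex_lt.mpr hlt)) hsum.not_gt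
  · exact lexGT_iff_toLex_lt.mpr hgt

end LexGT

open Classical in
/-- The partitions `λ ∈ π_n` of weight `i * n` with `λ ≻ (i, …, i)`, which index the terms of
`ε_i` other than `e_i^n`. -/
noncomputable def partitionsGTConst (n i : ℕ) : Finset (Fin n → ℕ) :=
  {l ∈ Finset.Nat.antidiagonalTuple n (i * n) | Antitone l ∧ LexGT l (fun _ => i)}

lemma mem_partitionsGTConst {n i : ℕ} {l : Fin n → ℕ} :
    l ∈ partitionsGTConst n i ↔ Antitone l ∧ ∑ a, l a = i * n ∧ LexGT l (fun _ => i) := by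
  classical
  rw [partitionsGTConst, Finset.mem_filter, Finset.Nat.mem_antidiagonalTuple, and_left_comm]

lemma sortDesc_mem_partitionsGTConst {n i : ℕ} {a : Fin n → ℕ} (hsum : ∑ j, a j = i * n)
    (hne : a ≠ fun _ => i) : sortDesc a ∈ partitionsGTConst n i := by
  have hsum' : ∑ j, sortDesc a j = i * n := (sum_sortDesc a id).trans hsum
  exact mem_partitionsGTConst.mpr ⟨antitone_sortDesc a, hsum',
    lexGT_const_of_le_sum (antitone_sortDesc a) hsum'.ge (sortDesc_eq_const_iff.not.mpr hne)⟩

lemma eMon_sortDesc {n : ℕ} (a : Fin n → ℕ) : eMon n (sortDesc a) = eMon n a :=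
  prod_sortDesc a X

lemma eMon_const (n i : ℕ) : eMon n (fun _ => i) = X i ^ n :=
  Fin.prod_const n (X i)

lemma eMon_mem_esub {n : ℕ} (a : Fin n → ℕ) : eMon n a ∈ Esub n :=
  Submodule.subset_span ⟨sortDesc a, antitone_sortDesc a, (eMon_sortDesc a).symm⟩

lemma wheelCoeff_eq_sum_eMon (k : ℕ) (t : ℂ) (m : ℕ) :
    wheelCoeff k t m = ∑ a ∈ Finset.Nat.antidiagonalTuple (k + 1) m,
      (∏ j : Fin (k + 1), t ^ ((j : ℕ) * a j)) • eMon (k + 1) a :=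
  rfl

lemma wheelCoeff_mem_esub (k : ℕ) (t : ℂ) (m : ℕ) : wheelCoeff k t m ∈ Esub (k + 1) := by
  rw [wheelCoeff_eq_sum_eMon]
  exact Submodule.sum_mem _ fun a _ => Submodule.smul_mem _ _ (eMon_mem_esub a)

/-- The generating series `e(z) = Σ e_i z^i`; substituting `t z` for `z` in it is
`PowerSeries.rescale (C t)`. -/
noncomputable def eSeries : PowerSeries (MvPolynomial ℕ ℂ) :=
  PowerSeries.mk X

lemma wheelCoeff_eq_coeff_prod_rescale (k : ℕ) (t : ℂ) (m : ℕ) :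
    wheelCoeff k t m = PowerSeries.coeff m
      (∏ j ∈ Finset.range (k + 1), PowerSeries.rescale (C t ^ j) eSeries) := by
  rw [← Fin.prod_univ_eq_prod_range (fun j => PowerSeries.rescale (C t ^ j) eSeries),
    coeff_prod_univ_fin, wheelCoeff]
  refine Finset.sum_congr rfl fun a _ => ?_
  simp only [PowerSeries.coeff_rescale, eSeries, PowerSeries.coeff_mk, Finset.prod_mul_distrib,
    ← pow_mul, smul_eq_C_mul, map_prod, map_pow]

lemma wheelCoeff_eq_zero {k : ℕ} {t : ℂ} (ht : IsPrimitiveRoot t (k + 1)) {m : ℕ}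
    (hm : ¬ (k + 1) ∣ m) : wheelCoeff k t m = 0 := by
  rw [wheelCoeff_eq_coeff_prod_rescale]
  exact coeff_prod_rescale_pow_eq_zero (ht.map_of_injective (C_injective ℕ ℂ)) hm eSeries

lemma wheelCoeff_sub_const_term_mem_span (k : ℕ) (t : ℂ) (i : ℕ) :
    wheelCoeff k t (i * (k + 1)) -
        (∏ j : Fin (k + 1), t ^ ((j : ℕ) * i)) • (X i : MvPolynomial ℕ ℂ) ^ (k + 1) ∈
      Submodule.span ℂ (eMon (k + 1) '' partitionsGTConst (k + 1) i) := by
  have hconst : (fun _ => i) ∈ Finset.Nat.antidiagonalTuple (k + 1) (i * (k + 1)) := by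
    simp [Finset.Nat.mem_antidiagonalTuple, mul_comm]
  rw [wheelCoeff_eq_sum_eMon, ← Finset.add_sum_erase _ _ hconst, eMon_const, add_sub_cancel_left]
  refine Submodule.sum_mem _ fun a ha => Submodule.smul_mem _ _ (Submodule.subset_span ?_)
  obtain ⟨hne, hsum⟩ := Finset.mem_erase.mp ha
  exact ⟨sortDesc a,
    sortDesc_mem_partitionsGTConst (Finset.Nat.mem_antidiagonalTuple.mp hsum) hne, eMon_sortDesc a⟩

/-- writing `∏_{i=0}^{k} e(t^i z) = Σ_{m≥0} c_m z^m`, one has `c_m = 0`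
unless `(k+1) ∣ m`, and `ε_i := c_{i(k+1)}` lies in `E_{k+1}` and has the expansion
`ε_i = (-1)^{ik} e_i^{k+1} + Σ_{λ ≻ (i^{k+1})} c_{λ,i} e_λ`, the sum over partitions
`λ ∈ π_{k+1}` of the same weight `i(k+1)` strictly greater than `(i^{k+1})` in the
lexicographic order. -/
theorem wheelCoeff_vanishing_and_expansion
    (k : ℕ) (hk : 0 < k) (t : ℂ) (ht : IsPrimitiveRoot t (k + 1)) :
    (∀ m : ℕ, ¬ (k + 1) ∣ m → wheelCoeff k t m = 0) ∧
    ∀ i : ℕ,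
      wheelCoeff k t (i * (k + 1)) ∈ Esub (k + 1) ∧
      ∃ (S : Finset (Fin (k + 1) → ℕ)) (coef : (Fin (k + 1) → ℕ) → ℂ),
        (∀ l ∈ S, Antitone l ∧ (∑ a, l a) = i * (k + 1) ∧
          LexGT l (fun _ => i)) ∧
        wheelCoeff k t (i * (k + 1)) =
          ((-1 : ℂ) ^ (i * k)) • (MvPolynomial.X i : MvPolynomial ℕ ℂ) ^ (k + 1) +
            ∑ l ∈ S, coef l • eMon (k + 1) l := by
  refine ⟨fun m hm => wheelCoeff_eq_zero ht hm, fun i => ⟨wheelCoeff_mem_esub k t _, ?_⟩⟩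
  obtain ⟨coef, hcoef⟩ := (Submodule.mem_span_image_finset_iff_exists_fun' ℂ).mp
    (wheelCoeff_sub_const_term_mem_span k t i)
  refine ⟨partitionsGTConst (k + 1) i, coef, fun l hl => mem_partitionsGTConst.mp hl, ?_⟩
  rw [hcoef, prod_pow_mul_eq_neg_one_pow ht, add_sub_cancel]
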